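/- Let n, m be positive integers with m ≥ 2 and let f : 𝔻^n → 𝔹_m be a holomorphic mapping. Then for every z = (z_1,…,z_n) ∈ 𝔻^n (whether f(z) = 0 or f(z) ≠ 0), ∑_{j=1}^n (1 − |z_j|²)² · g_j(z)² ≤ 1, where g_j(z) = |⟨f'_{z_j}(z), f(z)⟩|/|f(z)| if f(z) ≠ 0 and g_j(z) = |f'_{z_j}(z)| if f(z) = 0. -/

import Mathlib

/-!
Since `|⟨v, w⟩| / |w| ≤ |v|`, both cases follow from `∑ j (1 - |z_j|²)² |f'_{z_j}(z)|² ≤ 1`.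
Precomposing `f` with disk automorphisms taking `0` to `z_j` turns this into the bound
`∑ j |v_j|² ≤ 1` for the first-order Taylor coefficients `v_j` at the origin of a map from the
polydisk to the ball. Parseval on the torus is replaced by a choice of signs: by the
parallelogram law there are signs `ε_j` with `∑ j |v_j|² ≤ |∑ j ε_j v_j|²`
(`exists_signs_sum_sq_le`), and `∑ j ε_j v_j` is the derivative at `0` of the restriction to the
complex disk `t ↦ (ε_j t)_j`, so it has norm at most one by the Cauchy estimate
(`norm_deriv_zero_le_one`).
-/

open scoped InnerProductSpace

/-- Some choice of unimodular coefficients (the proof uses only `±1`) makes the sum at least as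
long as if the vectors were orthogonal. -/
lemma exists_signs_sum_sq_le {ι E : Type*} [NormedAddCommGroup E] [InnerProductSpace ℂ E]
    (v : ι → E) (s : Finset ι) :
    ∃ ε : ι → ℂ, (∀ j, ‖ε j‖ = 1) ∧ ∑ j ∈ s, ‖v j‖ ^ 2 ≤ ‖∑ j ∈ s, ε j • v j‖ ^ 2 := by
  classical
  induction s using Finset.induction_on with
  | empty => exact ⟨fun _ => 1, by simp, by simp⟩
  | insert a s ha ih =>
    obtain ⟨ε, hε, hs⟩ := ih
    have key : ∀ c : ℂ, ∑ j ∈ insert a s, Function.update ε a c j • v j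
        = c • v a + ∑ j ∈ s, ε j • v j := by
      intro c
      rw [Finset.sum_insert ha, Function.update_self]
      congr 1
      refine Finset.sum_congr rfl fun j hj => ?_
      rw [Function.update_of_ne (ne_of_mem_of_not_mem hj ha)]
    have hnorm : ∀ c : ℂ, ‖c‖ = 1 → ∀ j, ‖Function.update ε a c j‖ = 1 := by
      intro c hc j
      by_cases h : j = a
      · subst h; simpa using hc
      · simpa [Function.update_of_ne h] using hε j
    have hpar := parallelogram_law_with_norm ℂ (∑ j ∈ s, ε j • v j) (v a)
    -- The two sign choices for `v a` average to the sum of squares, so one of them suffices.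
    by_cases h : ‖∑ j ∈ s, ε j • v j‖ ^ 2 + ‖v a‖ ^ 2 ≤ ‖(∑ j ∈ s, ε j • v j) + v a‖ ^ 2
    · refine ⟨Function.update ε a 1, hnorm 1 (by simp), ?_⟩
      rw [key, Finset.sum_insert ha, one_smul, add_comm (v a)]
      linarith
    · refine ⟨Function.update ε a (-1), hnorm (-1) (by simp), ?_⟩
      rw [key, Finset.sum_insert ha, neg_one_smul, neg_add_eq_sub]
      nlinarith

/-- Cauchy estimate at the centre, with the radius tending to one. -/
lemma norm_deriv_zero_le_one {E : Type*} [NormedAddCommGroup E] [NormedSpace ℂ E]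
    (g : ℂ → E) (hg : ∀ t : ℂ, ‖t‖ < 1 → DifferentiableAt ℂ g t)
    (hb : ∀ t : ℂ, ‖t‖ < 1 → ‖g t‖ < 1) : ‖deriv g 0‖ ≤ 1 := by
  have h : ∀ r : ℝ, 0 < r → r < 1 → r * ‖deriv g 0‖ ≤ 1 := by
    intro r hr hr1
    have hd : DiffContOnCl ℂ g (Metric.ball 0 r) := by
      apply DifferentiableOn.diffContOnCl
      intro t ht
      rw [closure_ball _ hr.ne', mem_closedBall_zero_iff] at ht
      exact (hg t (ht.trans_lt hr1)).differentiableWithinAt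
    have := Complex.norm_deriv_le_of_forall_mem_sphere_norm_le hr hd (C := 1) fun t ht =>
      (hb t (by rw [mem_sphere_zero_iff_norm] at ht; linarith)).le
    rw [le_div_iff₀ hr] at this
    linarith
  by_contra! hlt
  obtain ⟨r, hr, hr1⟩ := exists_between ((inv_lt_one₀ (by linarith)).2 hlt)
  have h0 : 0 < ‖deriv g 0‖ := by linarith
  have hp := (inv_lt_iff_one_lt_mul₀ h0).1 hr
  have := h r (lt_trans (inv_pos.2 h0) hr) hr1
  linarith

/-- The squares of the two sides differ by `(1 - |a|²)(1 - |w|²) > 0`. -/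
lemma norm_add_lt_norm_one_add_conj_mul {a w : ℂ} (ha : ‖a‖ < 1) (hw : ‖w‖ < 1) :
    ‖a + w‖ < ‖1 + (starRingEnd ℂ) a * w‖ := by
  apply lt_of_pow_lt_pow_left₀ 2 (norm_nonneg _)
  have h1 : 0 < 1 - ‖a‖ ^ 2 := by nlinarith [norm_nonneg a]
  have h2 : 0 < 1 - ‖w‖ ^ 2 := by nlinarith [norm_nonneg w]
  have h3 := mul_pos h1 h2
  rw [Complex.sq_norm, Complex.normSq_apply] at h3 ⊢
  rw [Complex.sq_norm, Complex.normSq_apply] at h3 ⊢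
  simp only [Complex.add_re, Complex.add_im, Complex.mul_re, Complex.mul_im, Complex.conj_re,
    Complex.conj_im, Complex.one_re, Complex.one_im]
  nlinarith

/-- The disk automorphism `w ↦ (a + w) / (1 + conj a * w)`, sending `0` to `a`. -/
noncomputable def diskAut (a w : ℂ) : ℂ := (a + w) / (1 + (starRingEnd ℂ) a * w)

lemma one_add_conj_mul_ne_zero {a w : ℂ} (ha : ‖a‖ < 1) (hw : ‖w‖ < 1) :
    1 + (starRingEnd ℂ) a * w ≠ 0 :=
  norm_pos_iff.1 ((norm_nonneg _).trans_lt (norm_add_lt_norm_one_add_conj_mul ha hw))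

lemma norm_diskAut_lt_one {a w : ℂ} (ha : ‖a‖ < 1) (hw : ‖w‖ < 1) : ‖diskAut a w‖ < 1 := by
  have h := norm_add_lt_norm_one_add_conj_mul ha hw
  rw [diskAut, norm_div, div_lt_one ((norm_nonneg _).trans_lt h)]
  exact h

lemma differentiableAt_diskAut {a w : ℂ} (ha : ‖a‖ < 1) (hw : ‖w‖ < 1) :
    DifferentiableAt ℂ (diskAut a) w := by
  unfold diskAut
  exact DifferentiableAt.div (by fun_prop) (by fun_prop) (one_add_conj_mul_ne_zero ha hw)

lemma hasDerivAt_diskAut_zero (a : ℂ) :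
    HasDerivAt (diskAut a) ((1 - ‖a‖ ^ 2 : ℝ) : ℂ) 0 := by
  have h1 : HasDerivAt (fun w : ℂ => a + w) 1 0 := (hasDerivAt_id _).const_add a
  have h2 : HasDerivAt (fun w : ℂ => 1 + (starRingEnd ℂ) a * w) ((starRingEnd ℂ) a * 1) 0 :=
    ((hasDerivAt_id _).const_mul _).const_add 1
  refine (h1.fun_div h2 (by simp)).congr_deriv ?_
  have := Complex.mul_conj' a
  simp [← this]

/-- The estimate for the full partial derivatives, from which both cases follow. -/
lemma sum_sq_norm_partial_le_one {n : ℕ} {E : Type*} [NormedAddCommGroup E]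
    [InnerProductSpace ℂ E] (f : EuclideanSpace ℂ (Fin n) → E)
    (hf : DifferentiableOn ℂ f {z : EuclideanSpace ℂ (Fin n) | ∀ j, ‖z j‖ < 1})
    (hfb : ∀ z : EuclideanSpace ℂ (Fin n), (∀ j, ‖z j‖ < 1) → ‖f z‖ < 1)
    (z : EuclideanSpace ℂ (Fin n)) (hz : ∀ j, ‖z j‖ < 1) :
    ∑ j : Fin n, (1 - ‖z j‖ ^ 2) ^ 2 * ‖fderiv ℂ f z (EuclideanSpace.single j 1)‖ ^ 2 ≤ 1 := by
  have hopen : IsOpen {z : EuclideanSpace ℂ (Fin n) | ∀ j, ‖z j‖ < 1} := by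
    simp only [Set.ofPred_forall]
    exact isOpen_iInter_of_finite fun j => isOpen_lt (by fun_prop) continuous_const
  have hfd : ∀ w : EuclideanSpace ℂ (Fin n), (∀ j, ‖w j‖ < 1) → DifferentiableAt ℂ f w :=
    fun w hw => hf.differentiableAt (hopen.mem_nhds hw)
  obtain ⟨ε, hε, hs⟩ := exists_signs_sum_sq_le
    (fun j : Fin n => ((1 - ‖z j‖ ^ 2 : ℝ) : ℂ) • fderiv ℂ f z (EuclideanSpace.single j 1))
    Finset.univ
  have hεt : ∀ (t : ℂ), ‖t‖ < 1 → ∀ j, ‖ε j * t‖ < 1 := by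
    intro t ht j
    rwa [norm_mul, hε, one_mul]
  -- The analytic disk through `z` obtained from `t ↦ (ε_j t)_j` by the automorphisms.
  let c : ℂ → EuclideanSpace ℂ (Fin n) := fun t =>
    ∑ j, diskAut (z j) (ε j * t) • EuclideanSpace.single j (1 : ℂ)
  have hc : ∀ t j, c t j = diskAut (z j) (ε j * t) := by
    intro t j
    simp [c, Pi.single_apply]
  have hc0 : c 0 = z := by
    ext j
    simp [hc, diskAut]
  have hcb : ∀ t : ℂ, ‖t‖ < 1 → ∀ j, ‖c t j‖ < 1 := by
    intro t ht j
    rw [hc]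
    exact norm_diskAut_lt_one (hz j) (hεt t ht j)
  have hcd : ∀ t : ℂ, ‖t‖ < 1 → DifferentiableAt ℂ c t := by
    intro t ht
    refine DifferentiableAt.fun_sum fun j _ => DifferentiableAt.smul_const ?_ _
    exact (differentiableAt_diskAut (hz j) (hεt t ht j)).comp t
      (differentiableAt_id.const_mul (ε j))
  have hc' : HasDerivAt c
      (∑ j, (((1 - ‖z j‖ ^ 2 : ℝ) : ℂ) * ε j) • EuclideanSpace.single j (1 : ℂ)) 0 := by
    refine HasDerivAt.fun_sum fun j _ => HasDerivAt.smul_const ?_ _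
    have h1 : HasDerivAt (fun t : ℂ => ε j * t) (ε j) 0 := by
      simpa using (hasDerivAt_id (0 : ℂ)).const_mul (ε j)
    have h2 : HasDerivAt (diskAut (z j)) ((1 - ‖z j‖ ^ 2 : ℝ) : ℂ) (ε j * 0) := by
      rw [mul_zero]
      exact hasDerivAt_diskAut_zero (z j)
    exact h2.comp 0 h1
  have hfz : HasFDerivAt f (fderiv ℂ f z) (c 0) := by
    rw [hc0]
    exact (hfd z hz).hasFDerivAt
  have hg := hfz.comp_hasDerivAt (0 : ℂ) hc'
  have hle := norm_deriv_zero_le_one (f ∘ c)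
    (fun t ht => (hfd _ (hcb t ht)).comp t (hcd t ht)) (fun t ht => hfb _ (hcb t ht))
  rw [hg.deriv] at hle
  have heq : fderiv ℂ f z
      (∑ j, (((1 - ‖z j‖ ^ 2 : ℝ) : ℂ) * ε j) • EuclideanSpace.single j (1 : ℂ))
      = ∑ j, ε j • (((1 - ‖z j‖ ^ 2 : ℝ) : ℂ) •
          fderiv ℂ f z (EuclideanSpace.single j 1)) := by
    rw [map_sum]
    refine Finset.sum_congr rfl fun j _ => ?_
    rw [map_smul, smul_smul, mul_comm]
  rw [heq] at hle
  calc _ = _ := by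
        refine Finset.sum_congr rfl fun j _ => ?_
        rw [norm_smul, mul_pow, Complex.norm_real, Real.norm_eq_abs, sq_abs]
    _ ≤ _ := hs
    _ ≤ 1 := pow_le_one₀ (norm_nonneg _) hle

open scoped Classical in
/-- **Unconditional form of the Schwarz–Pick estimate** (remark after Theorem 1).
For holomorphic `f : 𝔻ⁿ → 𝔹_m` with `m ≥ 2`, the inequality
`∑ j (1 - |z_j|²)² |∇_j|f|(z)|² ≤ 1` holds at every point of the polydisk, where
`|∇_j|f|(z)| = |⟨f'_{z_j}(z), f(z)⟩|/|f(z)|` if `f z ≠ 0` and `= |f'_{z_j}(z)|` if `f z = 0`. -/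
theorem schwarz_pick_polydisk_sq_always
    (n m : ℕ) (hn : 0 < n) (hm : 2 ≤ m)
    (f : EuclideanSpace ℂ (Fin n) → EuclideanSpace ℂ (Fin m))
    (hf : DifferentiableOn ℂ f {z : EuclideanSpace ℂ (Fin n) | ∀ j, ‖z j‖ < 1})
    (hfb : ∀ z : EuclideanSpace ℂ (Fin n), (∀ j, ‖z j‖ < 1) → ‖f z‖ < 1)
    (z : EuclideanSpace ℂ (Fin n)) (hz : ∀ j, ‖z j‖ < 1) :
    ∑ j : Fin n, (1 - ‖z j‖ ^ 2) ^ 2 *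
        (if f z = 0 then ‖fderiv ℂ f z (EuclideanSpace.single j 1)‖
         else ‖⟪fderiv ℂ f z (EuclideanSpace.single j 1), f z⟫_ℂ‖ / ‖f z‖) ^ 2
      ≤ 1 := by
  refine le_trans (Finset.sum_le_sum fun j _ => ?_) (sum_sq_norm_partial_le_one f hf hfb z hz)
  split_ifs with h
  · exact le_rfl
  · gcongr
    rw [div_le_iff₀ (norm_pos_iff.2 h)]
    exact norm_inner_le_norm _ _
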